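/- Let V₁ and V₂ be the subalgebras of C_q[Mat_{2n,2n}] generated respectively by the entries t_{ij} with 1 ≤ i ≤ n (upper n rows) and with n+1 ≤ i ≤ 2n (lower n rows). Then the multiplication map m : V₁ ⊗ V₂ → C_q[Mat_{2n}], f ⊗ g ↦ fg, is a linear isomorphism of vector spaces. -/

import Mathlib

open TensorProduct

/-- The defining relations of the quantized coordinate algebra `C_q[Mat_N]`,
on the free algebra on generators `t_{ij}`, `(i,j) : Fin N × Fin N`. -/
inductive QMatRel (k : Type*) [Field k] (q : k) (N : ℕ) :
    FreeAlgebra k (Fin N × Fin N) → FreeAlgebra k (Fin N × Fin N) → Prop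
  | row : ∀ (i j j' : Fin N), j < j' → QMatRel k q N
      (FreeAlgebra.ι k (i, j) * FreeAlgebra.ι k (i, j'))
      (q • (FreeAlgebra.ι k (i, j') * FreeAlgebra.ι k (i, j)))
  | col : ∀ (i i' j : Fin N), i < i' → QMatRel k q N
      (FreeAlgebra.ι k (i, j) * FreeAlgebra.ι k (i', j))
      (q • (FreeAlgebra.ι k (i', j) * FreeAlgebra.ι k (i, j)))
  | anti : ∀ (i i' j j' : Fin N), i < i' → j' < j → QMatRel k q N
      (FreeAlgebra.ι k (i, j) * FreeAlgebra.ι k (i', j'))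
      (FreeAlgebra.ι k (i', j') * FreeAlgebra.ι k (i, j))
  | diag : ∀ (i i' j j' : Fin N), i < i' → j < j' → QMatRel k q N
      (FreeAlgebra.ι k (i, j) * FreeAlgebra.ι k (i', j'))
      (FreeAlgebra.ι k (i', j') * FreeAlgebra.ι k (i, j) +
        (q - q⁻¹) • (FreeAlgebra.ι k (i, j') * FreeAlgebra.ι k (i', j)))

/-- The quantized coordinate algebra `C_q[Mat_N]`. -/
abbrev QMat (k : Type*) [Field k] (q : k) (N : ℕ) := RingQuot (QMatRel k q N)

/-- The generators `t_{ij}` of `C_q[Mat_N]`. -/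
noncomputable def QMat.gen (k : Type*) [Field k] (q : k) (N : ℕ)
    (i j : Fin N) : QMat k q N :=
  RingQuot.mkAlgHom k (QMatRel k q N) (FreeAlgebra.ι k (i, j))

namespace QM

section
variable {k : Type*} [Field k] (q : k) (N : ℕ)

/-- diagonal coefficient -/
noncomputable def cc {N : ℕ} (y x : Fin N) : k := if y = x then q⁻¹ else 1
/-- off-diagonal coefficient -/
noncomputable def dd {N : ℕ} (y x : Fin N) : k := if x < y then q - q⁻¹ else 0

end

section
variable {k : Type*} [Field k] {q : k} (hq : q ≠ 0) {N : ℕ}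

theorem rels_gen (hq : q ≠ 0) (i i' : Fin N) (h : i ≤ i') (y x : Fin N) :
    (cc q i i' : k) • (QMat.gen k q N i' y * QMat.gen k q N i x) =
      (cc q y x : k) • (QMat.gen k q N i x * QMat.gen k q N i' y)
        - (dd q y x : k) • (QMat.gen k q N i y * QMat.gen k q N i' x) := by
  have key : ∀ a b, QMatRel k q N a b → RingQuot.mkAlgHom k (QMatRel k q N) a =
      RingQuot.mkAlgHom k (QMatRel k q N) b := fun a b h => RingQuot.mkAlgHom_rel k h
  rcases h.lt_or_eq with h | rfl
  · rcases lt_trichotomy x y with hx | rfl | hx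
    · have := key _ _ (QMatRel.diag i i' x y h hx)
      simp only [map_mul, map_add, map_smul] at this
      simp only [QMat.gen, cc, dd, h.ne, hx.ne', hx, if_true, if_false, this]
      module
    · have := key _ _ (QMatRel.col i i' x h)
      simp only [map_mul, map_smul] at this
      simp [QMat.gen, cc, dd, h.ne, this, smul_smul, hq]
    · have := key _ _ (QMatRel.anti i i' x y h hx)
      simp only [map_mul] at this
      simp [QMat.gen, cc, dd, h.ne, hx.ne, hx.not_gt, this]
  · rcases lt_trichotomy x y with hx | rfl | hx
    · have := key _ _ (QMatRel.row i x y hx)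
      simp only [map_mul, map_smul] at this
      simp only [QMat.gen, cc, dd, hx.ne', hx, if_true, if_false, this]
      module
    · simp [QMat.gen, cc, dd]
    · have := key _ _ (QMatRel.row i y x hx)
      simp only [map_mul, map_smul] at this
      simp [QMat.gen, cc, dd, hx.ne, hx.not_gt, this, smul_smul, hq]

/-- Universal property. -/
noncomputable def lft (hq : q ≠ 0) {B : Type*} [Ring B] [Algebra k B] (s : Fin N → Fin N → B)
    (hs : ∀ i i' : Fin N, i ≤ i' → ∀ y x : Fin N,
      (cc q i i' : k) • (s i' y * s i x) =
        (cc q y x : k) • (s i x * s i' y) - (dd q y x : k) • (s i y * s i' x)) :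
    QMat k q N →ₐ[k] B :=
  RingQuot.liftAlgHom k ⟨FreeAlgebra.lift k (fun p => s p.1 p.2), by
    intro a b hab
    cases hab with
    | row i j j' h =>
      have := hs i i le_rfl j' j
      simp only [cc, dd, h.ne', h, if_true, if_false] at this
      simp only [map_mul, map_smul, FreeAlgebra.lift_ι_apply]
      have h2 : s i j * s i j' = (q⁻¹ + (q - q⁻¹)) • (s i j' * s i j) := by
        rw [add_smul, this]; module
      rw [h2]; congr 1; ring
    | col i i' j h =>
      have := hs i i' h.le j j
      simp only [cc, dd, h.ne, if_true, if_false, lt_irrefl, one_smul, zero_smul, sub_zero] at this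
      simp only [map_mul, map_smul, FreeAlgebra.lift_ι_apply]
      rw [this, smul_smul, mul_inv_cancel₀ hq, one_smul]
    | anti i i' j j' h h' =>
      have := hs i i' h.le j' j
      simp only [cc, dd, h.ne, h'.ne, h'.not_gt, if_false, one_smul, zero_smul, sub_zero] at this
      simp only [map_mul, FreeAlgebra.lift_ι_apply]
      rw [this]
    | diag i i' j j' h h' =>
      have := hs i i' h.le j' j
      simp only [cc, dd, h.ne, h'.ne', h', if_true, if_false, one_smul] at this
      simp only [map_mul, map_add, map_smul, FreeAlgebra.lift_ι_apply]
      rw [this]; abel⟩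

@[simp] theorem lft_gen (hq : q ≠ 0) {B : Type*} [Ring B] [Algebra k B] (s : Fin N → Fin N → B)
    (hs) (i j : Fin N) : lft hq s hs (QMat.gen k q N i j) = s i j := by
  simp [lft, QMat.gen]

theorem ind {P : QMat k q N → Prop} (h0 : ∀ r : k, P (algebraMap k _ r))
    (hg : ∀ i j, P (QMat.gen k q N i j)) (ha : ∀ a b, P a → P b → P (a + b))
    (hm : ∀ a b, P a → P b → P (a * b)) (a : QMat k q N) : P a := by
  obtain ⟨a, rfl⟩ := RingQuot.mkAlgHom_surjective k (QMatRel k q N) a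
  induction a using FreeAlgebra.induction with
  | grade0 r => rw [AlgHom.commutes]; exact h0 r
  | grade1 x => exact hg x.1 x.2
  | mul a b iha ihb => rw [map_mul]; exact hm _ _ iha ihb
  | add a b iha ihb => rw [map_add]; exact ha _ _ iha ihb

/-- entry `(p,l)` of the image of a row `u` at column `j` -/
noncomputable def ent (q : k) {M : Type*} [AddCommGroup M] [Module k M] (u : Fin N → M)
    (j p l : Fin N) : M :=
  (if p = l then (cc q p j : k) • u j else 0) - (if l = j then (dd q p j : k) • u p else 0)

theorem ent_mul {B : Type*} [Ring B] [Algebra k B] (u v : Fin N → B) (j j' p l : Fin N) :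
    ∑ m, ent q u j p m * ent q v j' m l =
      (cc q p j : k) • (u j * ent q v j' p l) - (dd q p j : k) • (u p * ent q v j' j l) := by
  have : ∀ m, ent q u j p m * ent q v j' m l =
      (if p = m then (cc q p j : k) • (u j * ent q v j' p l) else 0) -
      (if m = j then (dd q p j : k) • (u p * ent q v j' j l) else 0) := by
    intro m
    rw [ent, sub_mul, ite_mul, ite_mul, zero_mul, smul_mul_assoc, smul_mul_assoc]
    congr 1
    · split_ifs with h
      · rw [h]
      · rfl
    · split_ifs with h
      · rw [h]
      · rfl
  simp [this, Finset.sum_sub_distrib]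

end
end QM
namespace QM
section
variable {k : Type*} [Field k] {q : k} {N : ℕ}

set_option maxHeartbeats 4000000 in
theorem ent_rel (hq : q ≠ 0) {B : Type*} [Ring B] [Algebra k B] (u v : Fin N → B) (κ : k)
    (H : ∀ y x, κ • (v y * u x) = (cc q y x : k) • (u x * v y) - (dd q y x : k) • (u y * v x))
    (y x p l : Fin N) :
    κ • ∑ m, ent q v y p m * ent q u x m l =
      (cc q y x : k) • ∑ m, ent q u x p m * ent q v y m l
       - (dd q y x : k) • ∑ m, ent q u y p m * ent q v x m l := by
  have e1 : κ • ∑ m, ent q v y p m * ent q u x m l =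
      (cc q p y : k) • ((if p = l then (cc q p x : k) • (κ • (v y * u x)) else 0)
        - (if l = x then (dd q p x : k) • (κ • (v y * u p)) else 0))
      - (dd q p y : k) • ((if y = l then (cc q y x : k) • (κ • (v p * u x)) else 0)
        - (if l = x then (dd q y x : k) • (κ • (v p * u y)) else 0)) := by
    rw [ent_mul]
    simp only [ent, mul_sub, mul_ite, mul_zero, mul_smul_comm]
    split_ifs <;> module
  rw [e1, ent_mul, ent_mul]
  simp only [H, ent, mul_sub, mul_ite, mul_zero, mul_smul_comm]
  clear H e1
  simp only [cc, dd]
  rcases lt_trichotomy x y with h1 | h1 | h1 <;> rcases lt_trichotomy x p with h2 | h2 | h2 <;>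
  rcases lt_trichotomy y p with h3 | h3 | h3 <;>
  by_cases h4 : l = p <;> by_cases h5 : l = x <;> by_cases h6 : l = y <;>
  first
  | (exfalso; omega)
  | (subst_vars
     simp (disch := omega) only [if_pos, if_neg, if_true, smul_zero, zero_smul, sub_zero, one_smul,
       sub_self, zero_sub]
     done)
  | (subst_vars
     simp (disch := omega) only [if_pos, if_neg, if_true, smul_zero, zero_smul, sub_zero, one_smul,
       sub_self, zero_sub]
     match_scalars <;> first | ring1 | (field_simp; done) | (field_simp; ring1))
end
end QM
namespace QM
section
variable {k : Type*} [Field k] {q : k} {N : ℕ}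

set_option maxHeartbeats 8000000 in
theorem ent_ent (hq : q ≠ 0) {M : Type*} [AddCommGroup M] [Module k M] (u : Fin N → M)
    (j y x m' m : Fin N) :
    (cc q m' m : k) • ent q (fun a => ent q u a y m') j x m
      - (dd q m m' : k) • ent q (fun a => ent q u a y m) j x m' =
    (cc q y x : k) • ent q (fun a => ent q u a x m) j y m'
      - (dd q y x : k) • ent q (fun a => ent q u a y m) j x m' := by
  simp only [ent, cc, dd]
  rcases lt_trichotomy x y with h1 | h1 | h1 <;> rcases lt_trichotomy x j with h2 | h2 | h2 <;>
  rcases lt_trichotomy y j with h3 | h3 | h3 <;>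
  try (exfalso; omega)
  all_goals
    by_cases h4 : m = j <;> by_cases h5 : m = x <;> by_cases h6 : m = y <;>
    try (exfalso; omega)
  all_goals
    by_cases h7 : m' = j <;> by_cases h8 : m' = x <;> by_cases h9 : m' = y <;>
    first
    | (exfalso; omega)
    | (subst_vars
       simp (disch := omega) only [if_pos, if_neg, if_true, smul_zero, zero_smul, sub_zero,
         one_smul, sub_self, zero_sub]
       done)
    | (subst_vars
       simp (disch := omega) only [if_pos, if_neg, if_true, smul_zero, zero_smul, sub_zero,
         one_smul, sub_self, zero_sub]
       match_scalars <;> first | ring1 | (field_simp; done) | (field_simp; ring1))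
end
end QM
namespace QM
section
variable {k : Type*} [Field k] {q : k} {N : ℕ}

/-- The twisting homomorphism. -/
noncomputable def phi (hq : q ≠ 0) : QMat k q N →ₐ[k] Matrix (Fin N) (Fin N) (QMat k q N) :=
  lft hq (fun i j => Matrix.of fun p l => ent q (QMat.gen k q N i) j p l) (by
    intro i i' h y x
    ext p l
    simpa [Matrix.mul_apply, Matrix.sub_apply, Matrix.smul_apply] using
      ent_rel hq (QMat.gen k q N i) (QMat.gen k q N i') _ (rels_gen hq i i' h) y x p l)

end
end QM
namespace QM
section
variable {k : Type*} [Field k] {q : k} {N : ℕ}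

/-- Abstract data: an algebra with the relations, the twisting map, and induction. -/
structure Data (q : k) (N : ℕ) (B : Type*) [Ring B] [Algebra k B] where
  hq : q ≠ 0
  t : Fin N → Fin N → B
  rel : ∀ i i' : Fin N, i ≤ i' → ∀ y x : Fin N,
      (cc q i i' : k) • (t i' y * t i x) =
        (cc q y x : k) • (t i x * t i' y) - (dd q y x : k) • (t i y * t i' x)
  phi : B →ₐ[k] Matrix (Fin N) (Fin N) B
  phi_t : ∀ i j p l, phi (t i j) p l = ent q (t i) j p l
  ind : ∀ {P : B → Prop} (h0 : ∀ r : k, P (algebraMap k _ r))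
    (hg : ∀ i j, P (t i j)) (ha : ∀ a b, P a → P b → P (a + b))
    (hm : ∀ a b, P a → P b → P (a * b)) (a : B), P a
  lft : ∀ s : Fin N → Fin N → Module.End k (TensorProduct k B B),
    (∀ i i' : Fin N, i ≤ i' → ∀ y x : Fin N,
      (cc q i i' : k) • (s i' y * s i x) =
        (cc q y x : k) • (s i x * s i' y) - (dd q y x : k) • (s i y * s i' x)) →
    ∃ Φ : B →ₐ[k] Module.End k (TensorProduct k B B), ∀ i j, Φ (t i j) = s i j

variable {B : Type*} [Ring B] [Algebra k B] (D : Data q N B)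
/-- entries of `phi` as linear maps -/
noncomputable def ph (p l : Fin N) : B →ₗ[k] B where
  toFun f := D.phi f p l
  map_add' a b := by simp
  map_smul' a b := by simp

theorem ph_gen (p l i j : Fin N) :
    ph D p l (D.t i j) = ent q (D.t i) j p l := by
  simp [ph, D.phi_t]

theorem ph_mul (p l : Fin N) (f g : B) :
    ph D p l (f * g) = ∑ m, ph D p m f * ph D m l g := by
  simp [ph, Matrix.mul_apply]

theorem ph_one (p l : Fin N) :
    ph D p l (1 : B) = if p = l then 1 else 0 := by
  simp [ph, Matrix.one_apply]

theorem map_ent {M M' : Type*} [AddCommGroup M] [Module k M] [AddCommGroup M'] [Module k M']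
    (F : M →ₗ[k] M') (u : Fin N → M) (j p l : Fin N) :
    F (ent q u j p l) = ent q (fun a => F (u a)) j p l := by
  simp only [ent, map_sub]
  split_ifs <;> simp

theorem pp_mul (y m' x m : Fin N) (f g : B) :
    ph D y m' (ph D x m (f * g)) =
      ∑ r, ∑ s, ph D y r (ph D x s f) * ph D r m' (ph D s m g) := by
  rw [ph_mul, map_sum, Finset.sum_comm]
  simp only [ph_mul]

theorem phE (f : B) : ∀ y x m' m : Fin N,
    (cc q m' m : k) • ph D y m' (ph D x m f) - (dd q m m' : k) • ph D y m (ph D x m' f) =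
    (cc q y x : k) • ph D x m (ph D y m' f) - (dd q y x : k) • ph D y m (ph D x m' f) := by
  induction f using D.ind with
  | h0 r =>
    intro y x m' m
    simp only [Algebra.algebraMap_eq_smul_one, map_smul, ph_one]
    simp only [apply_ite (ph D _ _), map_zero, ph_one]
    by_cases h1 : y = m' <;> by_cases h2 : x = m <;> by_cases h3 : y = m <;>
      by_cases h4 : x = m' <;> simp_all
  | hg i j =>
    intro y x m' m
    simp only [ph_gen, map_ent]
    exact ent_ent D.hq _ j y x m' m
  | ha a b iha ihb =>
    intro y x m' m
    have h1 := iha y x m' m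
    have h2 := ihb y x m' m
    simp only [map_add, smul_add]
    rw [add_sub_add_comm, h1, h2, add_sub_add_comm]
  | hm f g ihf ihg =>
    intro y x m' m
    calc _ = ∑ r, ∑ s, ph D y r (ph D x s f) * ((cc q m' m : k) • ph D r m' (ph D s m g)
            - (dd q m m' : k) • ph D r m (ph D s m' g)) := by
          simp only [pp_mul, Finset.smul_sum, ← Finset.sum_sub_distrib, mul_sub, mul_smul_comm]
      _ = ∑ r, ∑ s, (ph D y r (ph D x s f) * ((cc q r s : k) • ph D s m (ph D r m' g)))
          - ∑ r, ∑ s, (ph D y r (ph D x s f) * ((dd q r s : k) • ph D r m (ph D s m' g))) := by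
          simp only [← Finset.sum_sub_distrib, ← mul_sub]
          exact Finset.sum_congr rfl fun r _ => Finset.sum_congr rfl fun s _ => by rw [ihg]
      _ = ∑ r, ∑ s, (ph D y r (ph D x s f) * ((cc q r s : k) • ph D s m (ph D r m' g)))
          - ∑ r, ∑ s, (ph D y s (ph D x r f) * ((dd q s r : k) • ph D s m (ph D r m' g))) := by
          congr 1
          rw [Finset.sum_comm]
      _ = ∑ r, ∑ s, ((cc q r s : k) • ph D y r (ph D x s f)
            - (dd q s r : k) • ph D y s (ph D x r f)) * ph D s m (ph D r m' g) := by
          simp only [← Finset.sum_sub_distrib, sub_mul, mul_smul_comm, smul_mul_assoc]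
      _ = ∑ s, ∑ r, ((cc q y x : k) • ph D x s (ph D y r f)
            - (dd q y x : k) • ph D y s (ph D x r f)) * ph D s m (ph D r m' g) := by
          rw [Finset.sum_comm]
          exact Finset.sum_congr rfl fun r _ => Finset.sum_congr rfl fun s _ => by rw [ihf]
      _ = _ := by
          simp only [pp_mul, Finset.smul_sum, ← Finset.sum_sub_distrib, sub_mul, smul_mul_assoc]

open scoped TensorProduct

/-- operators of the upper generators -/
noncomputable def U (i j : Fin N) :
    Module.End k (B ⊗[k] B) :=
  TensorProduct.map (LinearMap.mulLeft k (D.t i j)) LinearMap.id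

/-- operators of the lower generators -/
noncomputable def X (i j : Fin N) :
    Module.End k (B ⊗[k] B) :=
  ∑ m, TensorProduct.map (ph D j m) (LinearMap.mulLeft k (D.t i m))

theorem U_tmul (i j : Fin N) (f g : B) :
    U D i j (f ⊗ₜ[k] g) = (D.t i j * f) ⊗ₜ g := by
  simp [U]

theorem X_tmul (i j : Fin N) (f g : B) :
    X D i j (f ⊗ₜ[k] g) = ∑ m, ph D j m f ⊗ₜ (D.t i m * g) := by
  simp [X, LinearMap.sum_apply]

theorem relU (i i' : Fin N) (h : i ≤ i') (y x : Fin N) :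
    (cc q i i' : k) • (U D i' y * U D i x) =
        (cc q y x : k) • (U D i x * U D i' y) - (dd q y x : k) • (U D i y * U D i' x) := by
  apply TensorProduct.ext'
  intro f g
  simp only [LinearMap.smul_apply, LinearMap.sub_apply, Module.End.mul_apply, U_tmul,
    ← mul_assoc, TensorProduct.smul_tmul', ← TensorProduct.sub_tmul]
  rw [← smul_mul_assoc (cc q i i' : k), D.rel i i' h y x, sub_mul, smul_mul_assoc, smul_mul_assoc]

theorem relX (i i' : Fin N) (h : i ≤ i') (y x : Fin N) :
    (cc q i i' : k) • (X D i' y * X D i x) =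
        (cc q y x : k) • (X D i x * X D i' y) - (dd q y x : k) • (X D i y * X D i' x) := by
  apply TensorProduct.ext'
  intro f g
  simp only [LinearMap.smul_apply, LinearMap.sub_apply, Module.End.mul_apply, X_tmul, map_sum,
    ← mul_assoc]
  calc _ = ∑ m, ∑ m', ph D y m' (ph D x m f) ⊗ₜ[k]
          (((cc q i i' : k) • (D.t i' m' * D.t i m)) * g) := by
        simp only [Finset.smul_sum, smul_mul_assoc, TensorProduct.tmul_smul]
    _ = ∑ m, ∑ m', ((cc q m' m : k) • ph D y m' (ph D x m f)) ⊗ₜ[k]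
          (D.t i m * D.t i' m' * g)
        - ∑ m, ∑ m', ((dd q m' m : k) • ph D y m' (ph D x m f)) ⊗ₜ[k]
          (D.t i m' * D.t i' m * g) := by
        simp only [D.rel i i' h, sub_mul, TensorProduct.tmul_sub, Finset.sum_sub_distrib,
          smul_mul_assoc, TensorProduct.tmul_smul, TensorProduct.smul_tmul']
    _ = ∑ m, ∑ m', ((cc q m' m : k) • ph D y m' (ph D x m f)) ⊗ₜ[k]
          (D.t i m * D.t i' m' * g)
        - ∑ m, ∑ m', ((dd q m m' : k) • ph D y m (ph D x m' f)) ⊗ₜ[k]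
          (D.t i m * D.t i' m' * g) := by
        congr 1
        rw [Finset.sum_comm]
    _ = ∑ m, ∑ m', ((cc q m' m : k) • ph D y m' (ph D x m f)
          - (dd q m m' : k) • ph D y m (ph D x m' f)) ⊗ₜ[k]
          (D.t i m * D.t i' m' * g) := by
        simp only [TensorProduct.sub_tmul, Finset.sum_sub_distrib]
    _ = ∑ m, ∑ m', ((cc q y x : k) • ph D x m (ph D y m' f)
          - (dd q y x : k) • ph D y m (ph D x m' f)) ⊗ₜ[k]
          (D.t i m * D.t i' m' * g) := by
        exact Finset.sum_congr rfl fun m _ => Finset.sum_congr rfl fun m' _ => by rw [phE D f]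
    _ = _ := by
        simp only [TensorProduct.sub_tmul, Finset.sum_sub_distrib, Finset.smul_sum,
          TensorProduct.smul_tmul']
        congr 1 <;> rw [Finset.sum_comm]

theorem relXU (i i' : Fin N) (y x : Fin N) :
    X D i' y * U D i x =
        (cc q y x : k) • (U D i x * X D i' y) - (dd q y x : k) • (U D i y * X D i' x) := by
  apply TensorProduct.ext'
  intro f g
  simp only [LinearMap.smul_apply, LinearMap.sub_apply, Module.End.mul_apply, X_tmul, U_tmul,
    map_sum, ph_mul, ph_gen]
  have : ∀ m, ∑ l, ent q (D.t i) x y l * ph D l m f =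
      (cc q y x : k) • (D.t i x * ph D y m f)
      - (dd q y x : k) • (D.t i y * ph D x m f) := by
    intro m
    simp [ent, sub_mul, ite_mul, Finset.sum_sub_distrib]
  simp only [this, TensorProduct.sub_tmul, Finset.sum_sub_distrib, Finset.smul_sum,
    TensorProduct.smul_tmul']

theorem act_ex (n : ℕ) : ∃ Φ : B →ₐ[k] Module.End k (B ⊗[k] B),
    ∀ i j, Φ (D.t i j) = if (i : ℕ) < n then U D i j else X D i j :=
  D.lft (fun i j => if (i : ℕ) < n then U D i j else X D i j) (by
    intro i i' h y x
    by_cases h1 : (i : ℕ) < n <;> by_cases h2 : (i' : ℕ) < n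
    · simp only [h1, h2, if_true]; exact relU D i i' h y x
    · have hne : i ≠ i' := by rintro rfl; exact h2 h1
      simp only [h1, h2, if_true, if_false]
      rw [cc, if_neg hne, one_smul]
      exact relXU D i i' y x
    · omega
    · simp only [h1, h2, if_false]; exact relX D i i' h y x)

/-- The action. -/
noncomputable def act (n : ℕ) : B →ₐ[k] Module.End k (B ⊗[k] B) :=
  (act_ex D n).choose

theorem act_t (n : ℕ) (i j : Fin N) :
    act D n (D.t i j) = if (i : ℕ) < n then U D i j else X D i j :=
  (act_ex D n).choose_spec i j

/-- upper generators -/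
def G1 (n : ℕ) : Set (B) :=
  {x | ∃ p : Fin N × Fin N, (p.1 : ℕ) < n ∧ x = D.t p.1 p.2}
/-- lower generators -/
def G2 (n : ℕ) : Set (B) :=
  {x | ∃ p : Fin N × Fin N, n ≤ (p.1 : ℕ) ∧ x = D.t p.1 p.2}

theorem act_low (n : ℕ) (f : B) (hf : f ∈ Algebra.adjoin k (G2 D n)) :
    ∀ g, act D n f (1 ⊗ₜ g) = 1 ⊗ₜ (f * g) := by
  induction hf using Algebra.adjoin_induction with
  | mem x hx =>
    obtain ⟨p, hp, rfl⟩ := hx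
    intro g
    rw [act_t, if_neg (by omega), X_tmul]
    simp [ph_one, TensorProduct.ite_tmul]
  | algebraMap r => intro g; simp [Algebra.algebraMap_eq_smul_one]
  | add a b _ _ ha hb => intro g; simp [ha, hb, add_mul, TensorProduct.tmul_add]
  | mul a b _ _ ha hb => intro g; simp [ha, hb, mul_assoc]

theorem act_up (n : ℕ) (f : B) (hf : f ∈ Algebra.adjoin k (G1 D n)) :
    ∀ h g, act D n f (h ⊗ₜ g) = (f * h) ⊗ₜ g := by
  induction hf using Algebra.adjoin_induction with
  | mem x hx =>
    obtain ⟨p, hp, rfl⟩ := hx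
    intro h g
    rw [act_t, if_pos hp, U_tmul]
  | algebraMap r => intro h g; simp [Algebra.algebraMap_eq_smul_one, TensorProduct.smul_tmul']
  | add a b _ _ ha hb => intro h g; simp [ha, hb, add_mul, TensorProduct.add_tmul]
  | mul a b _ _ ha hb => intro h g; simp [ha, hb, mul_assoc]

/-- multiplication map -/
noncomputable abbrev mm (V₁ V₂ : Subalgebra k (B)) : V₁ ⊗[k] V₂ →ₗ[k] B :=
  TensorProduct.lift ((LinearMap.mul k (B)).compl₁₂
        V₁.val.toLinearMap V₂.val.toLinearMap)

theorem inj (n : ℕ) :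
    Function.Injective (mm (Algebra.adjoin k (G1 D n)) (Algebra.adjoin k (G2 D n))) := by
  set V₁ := Algebra.adjoin k (G1 D n)
  set V₂ := Algebra.adjoin k (G2 D n)
  have key : ((act D n).toLinearMap.flip (1 ⊗ₜ 1)) ∘ₗ mm V₁ V₂ =
      TensorProduct.map V₁.val.toLinearMap V₂.val.toLinearMap := by
    apply TensorProduct.ext'
    rintro ⟨f, hf⟩ ⟨g, hg⟩
    simp [mm, act_low D n g hg, act_up D n f hf]
  have hinj : Function.Injective (TensorProduct.map V₁.val.toLinearMap V₂.val.toLinearMap) :=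
    TensorProduct.map_injective_of_flat_flat _ _ Subtype.val_injective Subtype.val_injective
  rw [← key] at hinj
  exact Function.Injective.of_comp (f := (act D n).toLinearMap.flip (1 ⊗ₜ 1)) hinj

theorem surj (n : ℕ) :
    Function.Surjective (mm (Algebra.adjoin k (G1 D n)) (Algebra.adjoin k (G2 D n))) := by
  set V₁ := Algebra.adjoin k (G1 D n) with hV1
  set V₂ := Algebra.adjoin k (G2 D n) with hV2
  rw [← LinearMap.range_eq_top]
  set R := LinearMap.range (mm V₁ V₂) with hR
  have hmem : ∀ f ∈ V₁, ∀ g ∈ V₂, f * g ∈ R := fun f hf g hg =>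
    ⟨⟨f, hf⟩ ⊗ₜ ⟨g, hg⟩, by simp [mm]⟩
  have hind : ∀ P : Submodule k (B), (∀ f ∈ V₁, ∀ g ∈ V₂, f * g ∈ P) → R ≤ P := by
    rintro P hP _ ⟨z, rfl⟩
    induction z using TensorProduct.induction_on with
    | zero => simp
    | tmul a b => simpa [mm] using hP a a.2 b b.2
    | add a b ha hb => rw [map_add]; exact P.add_mem ha hb
  have hleft : ∀ f ∈ V₁, ∀ z ∈ R, f * z ∈ R := by
    intro f hf
    refine hind (R.comap (LinearMap.mulLeft k f)) ?_
    intro a ha b hb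
    simpa [mul_assoc] using hmem _ (V₁.mul_mem hf ha) b hb
  have hup : ∀ f ∈ V₁, ∀ i : Fin N, n ≤ (i : ℕ) → ∀ y, ∃ F : Fin N → B,
      (∀ m, F m ∈ V₁) ∧ D.t i y * f = ∑ m, F m * D.t i m := by
    intro f hf
    induction hf using Algebra.adjoin_induction with
    | mem x hx =>
      obtain ⟨⟨i₁, j⟩, hp, rfl⟩ := hx
      intro i hi y
      have hlt : i₁ < i := by simp only at hp; omega
      have := D.rel i₁ i hlt.le y j
      rw [cc, if_neg hlt.ne, one_smul] at this
      have g1 : ∀ a, D.t i₁ a ∈ V₁ := fun a => Algebra.subset_adjoin ⟨(i₁, a), hp, rfl⟩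
      refine ⟨fun m => (if m = y then (cc q y j : k) • D.t i₁ j else 0)
        - (if m = j then (dd q y j : k) • D.t i₁ y else 0), fun m => ?_, ?_⟩
      · apply V₁.sub_mem
        · split_ifs
          · exact V₁.smul_mem (g1 _) _
          · exact V₁.zero_mem
        · split_ifs
          · exact V₁.smul_mem (g1 _) _
          · exact V₁.zero_mem
      · simp [this, sub_mul, Finset.sum_sub_distrib, ite_mul]
    | algebraMap r =>
      intro i hi y
      refine ⟨fun m => if m = y then algebraMap k B r else 0, fun m => ?_, ?_⟩
      · beta_reduce
        split_ifs
        · exact V₁.algebraMap_mem r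
        · exact V₁.zero_mem
      · simp [ite_mul, Algebra.commutes]
    | add a b _ _ ha hb =>
      intro i hi y
      obtain ⟨F, hF, h1⟩ := ha i hi y
      obtain ⟨G, hG, h2⟩ := hb i hi y
      refine ⟨fun m => F m + G m, fun m => V₁.add_mem (hF m) (hG m), ?_⟩
      simp [mul_add, add_mul, h1, h2, Finset.sum_add_distrib]
    | mul a b _ _ ha hb =>
      intro i hi y
      obtain ⟨F, hF, h1⟩ := ha i hi y
      choose G hG h2 using fun m => hb i hi m
      refine ⟨fun l => ∑ m, F m * G m l,
        fun l => V₁.sum_mem fun m _ => V₁.mul_mem (hF m) (hG m l), ?_⟩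
      rw [← mul_assoc, h1, Finset.sum_mul]
      simp only [mul_assoc, h2, Finset.mul_sum, Finset.sum_mul]
      rw [Finset.sum_comm]
  have hall : ∀ a : B, ∀ z ∈ R, a * z ∈ R := by
    refine D.ind ?_ ?_ ?_ ?_
    · intro r z hz
      rw [← Algebra.smul_def]
      exact R.smul_mem _ hz
    · intro i j
      by_cases hi : (i : ℕ) < n
      · exact hleft _ (Algebra.subset_adjoin ⟨(i, j), hi, rfl⟩)
      · refine hind (R.comap (LinearMap.mulLeft k (D.t i j))) ?_
        intro f hf g hg
        obtain ⟨F, hF, h1⟩ := hup f hf i (by omega) j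
        rw [Submodule.mem_comap, LinearMap.mulLeft_apply, ← mul_assoc, h1, Finset.sum_mul]
        refine R.sum_mem fun m _ => ?_
        rw [mul_assoc]
        exact hmem _ (hF m) _ (V₂.mul_mem
          (Algebra.subset_adjoin ⟨(i, m), by simp only; omega, rfl⟩) hg)
    · intro a b ha hb z hz
      rw [add_mul]
      exact R.add_mem (ha z hz) (hb z hz)
    · intro a b ha hb z hz
      rw [mul_assoc]
      exact ha _ (hb z hz)
  rw [eq_top_iff]
  intro a _
  have h1 : (1 : B) ∈ R := by simpa using hmem 1 V₁.one_mem 1 V₂.one_mem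
  simpa using hall a 1 h1

end
end QM

namespace QM
/-- the concrete data -/
noncomputable def data {k : Type*} [Field k] {q : k} (hq : q ≠ 0) {N : ℕ} :
    Data q N (QMat k q N) where
  hq := hq
  t := QMat.gen k q N
  rel := rels_gen hq
  phi := phi hq
  phi_t := by intro i j p l; simp [phi]
  ind := ind
  lft := fun s hs => ⟨lft hq s hs, lft_gen hq s hs⟩
end QM

/-- Let `V₁`, `V₂` be the subalgebras of `C_q[Mat_{2n}]` generated by the
entries of the upper `n` rows and of the lower `n` rows respectively. Then
the multiplication map `m : V₁ ⊗ V₂ → C_q[Mat_{2n}]`, `f ⊗ g ↦ fg`, is a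
linear isomorphism of vector spaces. -/
theorem stmt12 {k : Type*} [Field k] (q : k) (hq : q ≠ 0)
    (n : ℕ) (hn : 1 ≤ n)
    (V₁ V₂ : Subalgebra k (QMat k q (2 * n)))
    (hV₁ : V₁ = Algebra.adjoin k
      {x | ∃ p : Fin (2 * n) × Fin (2 * n), (p.1 : ℕ) < n ∧
        x = QMat.gen k q (2 * n) p.1 p.2})
    (hV₂ : V₂ = Algebra.adjoin k
      {x | ∃ p : Fin (2 * n) × Fin (2 * n), n ≤ (p.1 : ℕ) ∧
        x = QMat.gen k q (2 * n) p.1 p.2}) :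
    Function.Bijective
      (TensorProduct.lift ((LinearMap.mul k (QMat k q (2 * n))).compl₁₂
        V₁.val.toLinearMap V₂.val.toLinearMap)) := by
  subst hV₁ hV₂
  exact ⟨QM.inj (QM.data hq) n, QM.surj (QM.data hq) n⟩
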